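/- arXiv:1607.02785 — 7 statements merged into one kernel-verified Lean document; each statement's English description precedes it below -/
import Mathlib

section
/- Let E be a finite set and let τ : 2^E → 2^E be a closure operator, i.e., τ satisfies C1 (X ⊆ τ(X) for all X ⊆ E), C2 (X ⊆ Y implies τ(X) ⊆ τ(Y)), and C3 (τ(τ(X)) = τ(X) for all X ⊆ E). Define V : 2^E → 2^E by V(X) = E \ τ(X). Then (E, V) is a violator space: V satisfies consistency (G ∩ V(G) = ∅ for all G ⊆ E) and locality (for all F ⊆ G ⊆ E with G ∩ V(F) = ∅ one has V(G) = V(F)). -/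
/-- A closure operator τ (C1, C2, C3) on a finite set E gives a
violator space via V(X) = E \ τ(X): V satisfies consistency and locality. -/
theorem closure_gives_violator {α : Type*} [Fintype α] [DecidableEq α]
    (τ : Finset α → Finset α)
    (hC1 : ∀ X : Finset α, X ⊆ τ X)
    (hC2 : ∀ X Y : Finset α, X ⊆ Y → τ X ⊆ τ Y)
    (hC3 : ∀ X : Finset α, τ (τ X) = τ X) :
    (∀ G : Finset α, G ∩ (τ G)ᶜ = ∅) ∧
    (∀ F G : Finset α, F ⊆ G → G ∩ (τ F)ᶜ = ∅ → (τ G)ᶜ = (τ F)ᶜ) := by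
  have key : ∀ A B : Finset α, A ∩ Bᶜ = ∅ ↔ A ⊆ B := by
    intro A B
    rw [← Finset.sdiff_eq_inter_compl, Finset.sdiff_eq_empty_iff_subset]
  refine ⟨fun G => (key _ _).2 (hC1 G), fun F G hFG h => ?_⟩
  have h1 : τ G ⊆ τ F := by
    have h2 := hC2 _ _ ((key _ _).1 h)
    rwa [hC3] at h2
  rw [Finset.Subset.antisymm h1 (hC2 _ _ hFG)]
end

section
/- Let (H, V) be a violator space, i.e., H is a finite set and V : 2^H → 2^H satisfies consistency (G ∩ V(G) = ∅ for all G ⊆ H) and locality (for all F ⊆ G ⊆ H with G ∩ V(F) = ∅ one has V(G) = V(F)). Define τ : 2^H → 2^H by τ(X) = H \ V(X). Then τ satisfies axioms C1 (X ⊆ τ(X) for all X ⊆ H) and C3 (τ(τ(X)) = τ(X) for all X ⊆ H). -/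
/-- If (H,V) is a violator space (consistency and locality), then
τ(X) = H \ V(X) satisfies C1 and C3. -/
theorem violator_gives_C1_C3 {α : Type*} [Fintype α] [DecidableEq α]
    (V : Finset α → Finset α)
    (hCons : ∀ G : Finset α, G ∩ V G = ∅)
    (hLoc : ∀ F G : Finset α, F ⊆ G → G ∩ V F = ∅ → V G = V F) :
    (∀ X : Finset α, X ⊆ (V X)ᶜ) ∧
    (∀ X : Finset α, (V ((V X)ᶜ))ᶜ = (V X)ᶜ) := by
  have h1 : ∀ X : Finset α, X ⊆ (V X)ᶜ := by
    intro X x hx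
    rw [Finset.mem_compl]
    intro hv
    have h : x ∈ X ∩ V X := Finset.mem_inter.mpr ⟨hx, hv⟩
    rw [hCons X] at h
    exact absurd h (Finset.notMem_empty x)
  refine ⟨h1, fun X => ?_⟩
  rw [hLoc X (V X)ᶜ (h1 X) (by ext x; simp)]
end

section
/- Let (E, τ) be a convex space: E is a finite set and τ : 2^E → 2^E satisfies C1 (X ⊆ τ(X) for all X ⊆ E) and convexity (X ⊆ Y ⊆ Z and τ(X) = τ(Z) imply τ(Y) = τ(X)). Then (E, τ) is uniquely generated if and only if for all X, Y ⊆ E, τ(X) = τ(Y) implies τ(X ∩ Y) = τ(X) = τ(Y). -/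
/-- `B` is a basis of `X` w.r.t. `τ`: a generator of `X` minimal under inclusion. -/
def IsBasis {α : Type*} (τ : Finset α → Finset α) (X B : Finset α) : Prop :=
  τ B = τ X ∧ ∀ B' : Finset α, τ B' = τ X → B' ⊆ B → B' = B

theorem exists_basis_sub {α : Type*} (τ : Finset α → Finset α) (X Y : Finset α)
    (h : τ Y = τ X) : ∃ B, B ⊆ Y ∧ IsBasis τ X B := by
  induction Y using Finset.strongInduction with
  | H Y ih =>
    by_cases hY : ∀ B' : Finset α, τ B' = τ X → B' ⊆ Y → B' = Y
    · exact ⟨Y, Finset.Subset.refl _, h, hY⟩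
    · push Not at hY
      obtain ⟨B', h1, h2, h3⟩ := hY
      obtain ⟨B, hB, hb⟩ := ih B' (Finset.ssubset_iff_subset_ne.2 ⟨h2, h3⟩) h1
      exact ⟨B, hB.trans h2, hb⟩

/-- A convex space (C1 + convexity) is uniquely generated iff
τ(X) = τ(Y) implies τ(X ∩ Y) = τ(X) = τ(Y). -/
theorem convexSpace_uniquelyGenerated_iff_inter {α : Type*} [Fintype α] [DecidableEq α]
    (τ : Finset α → Finset α)
    (hC1 : ∀ X : Finset α, X ⊆ τ X)
    (hConv : ∀ X Y Z : Finset α, X ⊆ Y → Y ⊆ Z → τ X = τ Z → τ Y = τ X) :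
    (∀ X : Finset α, ∃! B : Finset α, IsBasis τ X B) ↔
    (∀ X Y : Finset α, τ X = τ Y → τ (X ∩ Y) = τ X ∧ τ (X ∩ Y) = τ Y) := by
  constructor
  · intro h X Y hXY
    obtain ⟨B, hB, hb⟩ := exists_basis_sub τ X X rfl
    obtain ⟨C, hC, hc⟩ := exists_basis_sub τ X Y hXY.symm
    have e : B = C := (h X).unique hb hc
    subst e
    have k := hConv B (X ∩ Y) X (Finset.subset_inter hB hC) Finset.inter_subset_left hb.1
    have k2 : τ (X ∩ Y) = τ X := k.trans hb.1
    exact ⟨k2, k2.trans hXY⟩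
  · intro h X
    obtain ⟨B, -, hb⟩ := exists_basis_sub τ X X rfl
    refine ⟨B, hb, fun C hc => ?_⟩
    have k := (h B C (hb.1.trans hc.1.symm)).1.trans hb.1
    exact (hc.2 _ k Finset.inter_subset_right).symm.trans (hb.2 _ k Finset.inter_subset_left)
end

section
/- Let (E, τ) be a violator space: E is a finite set and τ : 2^E → 2^E satisfies C1 (X ⊆ τ(X) for all X ⊆ E) and C22 (F ⊆ G ⊆ τ(F) implies τ(G) = τ(F)). Then (E, τ) is uniquely generated if and only if τ satisfies the anti-exchange property: for all X ⊆ E and all distinct p, q ∈ E with p, q ∉ τ(X), if p ∈ τ(X ∪ {q}) then q ∉ τ(X ∪ {p}). -/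
/-- A violator space (C1 + C22) is uniquely generated iff τ satisfies
the anti-exchange property. -/
theorem violator_uniquelyGenerated_iff_antiExchange {α : Type*} [Fintype α] [DecidableEq α]
    (τ : Finset α → Finset α)
    (hC1 : ∀ X : Finset α, X ⊆ τ X)
    (hC22 : ∀ F G : Finset α, F ⊆ G → G ⊆ τ F → τ G = τ F) :
    (∀ X : Finset α, ∃! B : Finset α, IsBasis τ X B) ↔
    (∀ (X : Finset α) (p q : α), p ≠ q → p ∉ τ X → q ∉ τ X →
      p ∈ τ (insert q X) → q ∉ τ (insert p X)) := by
  constructor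
  · intro h X p q hpq hp hq h1 h2
    have e1 : τ (insert p (insert q X)) = τ (insert q X) :=
      hC22 _ _ (Finset.subset_insert _ _) (Finset.insert_subset h1 (hC1 _))
    have e2 : τ (insert q (insert p X)) = τ (insert p X) :=
      hC22 _ _ (Finset.subset_insert _ _) (Finset.insert_subset h2 (hC1 _))
    rw [Finset.insert_comm, e1] at e2
    have key : ∀ n : ℕ, ∀ Y : Finset α, Y.card = n → ∃ B, B ⊆ Y ∧ IsBasis τ Y B := by
      intro n
      induction n using Nat.strong_induction_on with
      | _ n ih =>
        intro Y hY
        by_cases hb : ∀ B' : Finset α, τ B' = τ Y → B' ⊆ Y → B' = Y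
        · exact ⟨Y, subset_rfl, rfl, hb⟩
        · push Not at hb
          obtain ⟨B', hB, hs, hne⟩ := hb
          obtain ⟨B, hB1, hB2⟩ := ih B'.card
            (hY ▸ Finset.card_lt_card (hs.ssubset_of_ne hne)) B' rfl
          refine ⟨B, hB1.trans hs, ?_⟩
          unfold IsBasis at hB2 ⊢
          rwa [hB] at hB2
    obtain ⟨B, hBs, hB⟩ := key _ (insert p X) rfl
    obtain ⟨B', hBs', hB'⟩ := key _ (insert q X) rfl
    have hB2 : IsBasis τ (insert p X) B' := by
      unfold IsBasis at hB' ⊢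
      rwa [e2] at hB'
    have hBB : B = B' := (h (insert p X)).unique hB hB2
    subst hBB
    have hBX : B ⊆ X := by
      intro x hx
      have a1 := Finset.mem_insert.1 (hBs hx)
      have a2 := Finset.mem_insert.1 (hBs' hx)
      grind
    have e3 : τ X = τ B := hC22 _ _ hBX (by
      rw [hB.1]; exact (Finset.subset_insert _ _).trans (hC1 _))
    rw [e3, hB.1] at hp
    exact hp (hC1 _ (Finset.mem_insert_self _ _))
  · intro h X
    obtain ⟨K, hK⟩ : ∃ K, K = τ X := ⟨_, rfl⟩
    have hKK : τ K = K := by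
      have := hC22 X (τ X) (hC1 X) subset_rfl
      rw [hK, this]
    let B := K.filter (fun p => τ (K.erase p) ≠ K)
    have hB1 : ∀ Y, τ Y = K → B ⊆ Y := by
      intro Y hY p hp
      obtain ⟨hpK, hpe⟩ := Finset.mem_filter.1 hp
      by_contra hpY
      apply hpe
      have hYK : Y ⊆ K := hY ▸ hC1 Y
      rw [hC22 Y (K.erase p) (fun x hx => Finset.mem_erase.2
        ⟨fun e => hpY (e ▸ hx), hYK hx⟩) (by rw [hY]; exact Finset.erase_subset _ _), hY]
    have add : ∀ (Y : Finset α) (p : α), p ∈ τ Y → τ (insert p Y) = τ Y := fun Y p hp =>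
      hC22 _ _ (Finset.subset_insert _ _) (Finset.insert_subset hp (hC1 _))
    have hB2 : ∀ n : ℕ, ∀ Y, (K \ Y).card = n → B ⊆ Y → Y ⊆ K → τ Y = K := by
      intro n
      induction n using Nat.strong_induction_on with
      | _ n ih =>
        intro Y hn hBY hYK
        have step : ∀ p, p ∈ K → p ∉ Y → τ (insert p Y) = K := by
          intro p hp hpY
          refine ih _ ?_ (insert p Y) rfl (hBY.trans (Finset.subset_insert _ _))
            (Finset.insert_subset hp hYK)
          rw [← hn]
          apply Finset.card_lt_card
          rw [Finset.ssubset_iff_of_subset (Finset.sdiff_subset_sdiff subset_rfl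
            (Finset.subset_insert _ _))]
          exact ⟨p, by simp [hp, hpY], by simp⟩
        by_cases hKY : K ⊆ Y
        · rw [hYK.antisymm hKY, hKK]
        obtain ⟨p, hp, hpY⟩ := Finset.not_subset.1 hKY
        by_cases hq : ∃ q, q ∈ K ∧ q ∉ Y ∧ p ≠ q
        · obtain ⟨q, hq, hqY, hpq⟩ := hq
          have sp := step p hp hpY
          have sq := step q hq hqY
          by_contra hne
          refine h Y p q hpq ?_ ?_ (by rwa [sq]) (by rwa [sp])
          · intro hh; exact hne ((add _ _ hh).symm.trans sp)
          · intro hh; exact hne ((add _ _ hh).symm.trans sq)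
        · push Not at hq
          have : Y = K.erase p := by
            ext x
            rw [Finset.mem_erase]
            grind
          by_contra hne
          exact hpY (hBY (Finset.mem_filter.2 ⟨hp, this ▸ hne⟩))
    have hB3 : τ B = K := hB2 _ B rfl subset_rfl (Finset.filter_subset _ _)
    refine ⟨B, ⟨hB3.trans hK, fun B' hB' hs => hs.antisymm (hB1 _ (hB'.trans hK.symm))⟩, ?_⟩
    rintro B' ⟨hB', hm⟩
    exact (hm B (hB3.trans hK) (hB1 _ (hB'.trans hK.symm))).symm
end

section
/- Let (E, τ) be a violator space: E is a finite set and τ : 2^E → 2^E satisfies C1 (X ⊆ τ(X) for all X ⊆ E) and C22 (F ⊆ G ⊆ τ(F) implies τ(G) = τ(F)). Then for every X ⊆ E and x ∈ X: x is an extreme point of X (i.e., x ∉ τ(X \ {x})) if and only if x ∈ B for every generator B of X contained in X (i.e., every B ⊆ X with τ(B) = τ(X)). -/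
/-- In a violator space (C1 + C22), for x ∈ X: x is an extreme point
of X iff x belongs to every generator B ⊆ X of X. -/
theorem extremePoint_iff_mem_generators {α : Type*} [Fintype α] [DecidableEq α]
    (τ : Finset α → Finset α)
    (hC1 : ∀ X : Finset α, X ⊆ τ X)
    (hC22 : ∀ F G : Finset α, F ⊆ G → G ⊆ τ F → τ G = τ F) :
    ∀ (X : Finset α) (x : α), x ∈ X →
      (x ∉ τ (X.erase x) ↔ ∀ B : Finset α, B ⊆ X → τ B = τ X → x ∈ B) := by
  intro X x hx
  constructor
  · intro h B hB hτ
    by_contra hxB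
    apply h
    have h1 : B ⊆ X.erase x := fun y hy =>
      Finset.mem_erase.2 ⟨fun e => hxB (e ▸ hy), hB hy⟩
    have h2 : X.erase x ⊆ τ B := fun y hy => by
      rw [hτ]
      exact hC1 X (Finset.mem_of_mem_erase hy)
    rw [hC22 B _ h1 h2, hτ]
    exact hC1 X hx
  · intro h hmem
    have h2 : X ⊆ τ (X.erase x) := fun y hy => by
      by_cases e : y = x
      · rw [e]
        exact hmem
      · exact hC1 _ (Finset.mem_erase.2 ⟨e, hy⟩)
    have h3 := h (X.erase x) (Finset.erase_subset x X)
      (hC22 _ X (Finset.erase_subset x X) h2).symm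
    exact Finset.notMem_erase x X h3
end

section
/- Let (E, τ) be a uniquely generated violator space: E is a finite set, τ : 2^E → 2^E satisfies C1 (X ⊆ τ(X) for all X ⊆ E) and C22 (F ⊆ G ⊆ τ(F) implies τ(G) = τ(F)), and every X ⊆ E has a unique basis. Then for every A ⊆ E, the equivalence class [A] = {X ⊆ E : τ(X) = τ(A)} equals the interval [B_A, τ(A)] = {C ⊆ E : B_A ⊆ C ⊆ τ(A)}, where B_A is the unique basis of A. Consequently the equivalence classes of the relation τ(X) = τ(Y) form a partition of the power set of E into intervals (a hypercube partition). -/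
/-- In a uniquely generated violator space (C1 + C22), the equivalence
class [A] = {X : τ(X) = τ(A)} equals the interval [B_A, τ(A)], where B_A is the
unique basis of A; hence the classes partition the power set into intervals. -/
theorem class_eq_interval {α : Type*} [Fintype α] [DecidableEq α]
    (τ : Finset α → Finset α)
    (hC1 : ∀ X : Finset α, X ⊆ τ X)
    (hC22 : ∀ F G : Finset α, F ⊆ G → G ⊆ τ F → τ G = τ F)
    (hUG : ∀ X : Finset α, ∃! B : Finset α, IsBasis τ X B) :
    ∀ A B_A : Finset α, IsBasis τ A B_A →
      {X : Finset α | τ X = τ A} = {C : Finset α | B_A ⊆ C ∧ C ⊆ τ A} := by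
  intro A B hB
  ext X
  simp only [Set.mem_setOf_eq]
  constructor
  · intro hX
    refine ⟨?_, hX ▸ hC1 X⟩
    have key : ∀ Y : Finset α, τ Y = τ A → ∃ B' ⊆ Y, IsBasis τ A B' := by
      intro Y
      induction Y using Finset.strongInduction with
      | H Y ih =>
        intro hY
        by_cases h : ∀ B' : Finset α, τ B' = τ A → B' ⊆ Y → B' = Y
        · exact ⟨Y, Finset.Subset.refl Y, hY, h⟩
        · push Not at h
          obtain ⟨Z, hZ, hZY, hne⟩ := h
          obtain ⟨B', hB', hb⟩ := ih Z (Finset.ssubset_iff_subset_ne.mpr ⟨hZY, hne⟩) hZ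
          exact ⟨B', hB'.trans hZY, hb⟩
    obtain ⟨B', hB', hb⟩ := key X hX
    rw [(hUG A).unique hB hb]
    exact hB'
  · rintro ⟨h1, h2⟩
    rw [← hB.1] at h2 ⊢
    exact hC22 B X h1 h2
end

section
/- Let E be a finite set and let P be a hypercube partition of the power set of E, i.e., a partition of 2^E into pairwise disjoint intervals [A, B] = {C : A ⊆ C ⊆ B}. Define τ : 2^E → 2^E by τ(X) = B, where [A, B] is the block of P containing X. Then τ satisfies C1 (X ⊆ τ(X) for all X ⊆ E) and C22 (F ⊆ G ⊆ τ(F) implies τ(G) = τ(F)), the space (E, τ) is uniquely generated, and the equivalence classes of the relation τ(X) = τ(Y) are exactly the blocks of P. -/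
/-- If P is a hypercube partition of the power set of E (every block
is an interval [A,B] and every X lies in exactly one block), and τ(X) is defined to
be the top of the block containing X, then τ satisfies C1 and C22, the resulting
space is uniquely generated, and the equivalence classes of τ(X) = τ(Y) are exactly
the blocks of P. -/
theorem hypercubePartition_gives_uniquelyGenerated_violator
    {α : Type*} [Fintype α] [DecidableEq α]
    (P : Set (Set (Finset α)))
    (hInt : ∀ S ∈ P, ∃ A B : Finset α, A ⊆ B ∧ S = {C : Finset α | A ⊆ C ∧ C ⊆ B})
    (hPart : ∀ X : Finset α, ∃! S : Set (Finset α), S ∈ P ∧ X ∈ S)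
    (τ : Finset α → Finset α)
    (hτ : ∀ (X : Finset α) (S : Set (Finset α)), S ∈ P → X ∈ S →
      ∀ A B : Finset α, A ⊆ B → S = {C : Finset α | A ⊆ C ∧ C ⊆ B} → τ X = B) :
    (∀ X : Finset α, X ⊆ τ X) ∧
    (∀ F G : Finset α, F ⊆ G → G ⊆ τ F → τ G = τ F) ∧
    (∀ X : Finset α, ∃! B : Finset α, IsBasis τ X B) ∧
    (∀ S ∈ P, ∀ X ∈ S, S = {Y : Finset α | τ Y = τ X}) := by
  have key : ∀ X : Finset α, ∃ A : Finset α, A ⊆ X ∧ X ⊆ τ X ∧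
      (∀ C, τ C = τ X ↔ A ⊆ C ∧ C ⊆ τ X) ∧
      ∀ S ∈ P, X ∈ S → S = {C : Finset α | A ⊆ C ∧ C ⊆ τ X} := by
    intro X
    obtain ⟨S, ⟨hS, hX⟩, hu⟩ := hPart X
    obtain ⟨A, B, hAB, hSe⟩ := hInt S hS
    have hB : τ X = B := hτ X S hS hX A B hAB hSe
    have hX' : A ⊆ X ∧ X ⊆ B := by rw [hSe] at hX; exact hX
    refine ⟨A, hX'.1, hB ▸ hX'.2, ?_, ?_⟩
    · intro C
      rw [hB]
      constructor
      · intro hC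
        obtain ⟨T, ⟨hT, hCT⟩, -⟩ := hPart C
        obtain ⟨A', B', hAB', hTe⟩ := hInt T hT
        have hB' : τ C = B' := hτ C T hT hCT A' B' hAB' hTe
        have hBB : B' = B := hB'.symm.trans hC
        subst hBB
        obtain ⟨U, -, hU⟩ := hPart B'
        have h1 : S = U := hU S ⟨hS, by rw [hSe]; exact ⟨hAB, subset_rfl⟩⟩
        have h2 : T = U := hU T ⟨hT, by rw [hTe]; exact ⟨hAB', subset_rfl⟩⟩
        rw [h2, ← h1, hSe] at hCT
        exact hCT
      · intro hC
        exact hτ C S hS (by rw [hSe]; exact hC) A B hAB hSe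
    · intro T hT hXT
      rw [hu T ⟨hT, hXT⟩, hSe, hB]
  refine ⟨fun X => ?_, fun F G hFG hG => ?_, fun X => ?_, fun S hS X hX => ?_⟩
  · obtain ⟨A, -, h, -⟩ := key X
    exact h
  · obtain ⟨A, hA, -, h, -⟩ := key F
    exact (h G).2 ⟨hA.trans hFG, hG⟩
  · obtain ⟨A, hA, hX, h, -⟩ := key X
    have hAg : τ A = τ X := (h A).2 ⟨subset_rfl, hA.trans hX⟩
    refine ⟨A, ⟨hAg, fun B' hB' hs => hs.antisymm ((h B').1 hB').1⟩, ?_⟩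
    rintro B ⟨hB, hm⟩
    exact (hm A hAg ((h B).1 hB).1).symm
  · obtain ⟨A, -, -, h, h'⟩ := key X
    rw [h' S hS hX]
    ext C
    exact (h C).symm
end
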